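/- arXiv:0906.0037 — 5 statements merged into one kernel-verified Lean document; each statement's English description precedes it below -/
import Mathlib

section
/- Let m, n be positive integers, A an m×n complex matrix and B an n×m complex matrix, and let z ∈ ℂ be nonzero and such that both A·B − z·I_m and B·A − z·I_n are invertible. Then tr((A·B − z·I_m)⁻¹) − tr((B·A − z·I_n)⁻¹) = (n − m)/z. Equivalently, the finite-dimensional Stieltjes transforms G_{AB}(z) = (1/m)·tr((A·B − z·I_m)⁻¹) and G_{BA}(z) = (1/n)·tr((B·A − z·I_n)⁻¹) satisfy G_{AB}(z) = (n/m)·G_{BA}(z) − (1 − n/m)·(1/z). -/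
/-!
Write `P = (AB - z)⁻¹` and `Q = (BA - z)⁻¹`. The identity `(AB - z)A = A(BA - z)` gives the
intertwining relation `PA = AQ`, so `tr(ABP) = tr(BPA) = tr(BAQ)` by cyclicity of the trace.
Since `ABP = 1 + zP` and `BAQ = 1 + zQ`, this reads `m + z tr P = n + z tr Q`.
-/

open Matrix

/-- For an `m×n` complex matrix `A`, an `n×m` complex matrix `B`, and a
nonzero `z ∈ ℂ` such that `A·B − z·I_m` and `B·A − z·I_n` are invertible,
`tr((A·B − z·I_m)⁻¹) − tr((B·A − z·I_n)⁻¹) = (n − m)/z`; equivalently the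
finite-dimensional Stieltjes transforms satisfy
`G_{AB}(z) = (n/m)·G_{BA}(z) − (1 − n/m)·(1/z)`. -/
theorem stmt1 (m n : ℕ) (hm : 0 < m) (hn : 0 < n)
    (A : Matrix (Fin m) (Fin n) ℂ) (B : Matrix (Fin n) (Fin m) ℂ)
    (z : ℂ) (hz : z ≠ 0)
    (hAB : IsUnit (A * B - z • (1 : Matrix (Fin m) (Fin m) ℂ)))
    (hBA : IsUnit (B * A - z • (1 : Matrix (Fin n) (Fin n) ℂ))) :
    ((A * B - z • 1)⁻¹.trace - (B * A - z • 1)⁻¹.trace = ((n : ℂ) - (m : ℂ)) / z) ∧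
    (1 / (m : ℂ)) * (A * B - z • 1)⁻¹.trace
      = ((n : ℂ) / (m : ℂ)) * ((1 / (n : ℂ)) * (B * A - z • 1)⁻¹.trace)
        - (1 - (n : ℂ) / (m : ℂ)) * (1 / z) := by
  rw [Matrix.isUnit_iff_isUnit_det] at hAB hBA
  have hP := Matrix.mul_nonsing_inv _ hAB
  have hP' := Matrix.nonsing_inv_mul _ hAB
  have hQ := Matrix.mul_nonsing_inv _ hBA
  generalize (A * B - z • (1 : Matrix (Fin m) (Fin m) ℂ))⁻¹ = P at *
  generalize (B * A - z • (1 : Matrix (Fin n) (Fin n) ℂ))⁻¹ = Q at *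
  have hcomm : (A * B - z • (1 : Matrix (Fin m) (Fin m) ℂ)) * A
      = A * (B * A - z • (1 : Matrix (Fin n) (Fin n) ℂ)) := by
    simp [Matrix.sub_mul, Matrix.mul_sub, Matrix.mul_assoc]
  have hPA : P * A = A * Q := by
    calc P * A = P * (A * ((B * A - z • 1) * Q)) := by rw [hQ, Matrix.mul_one]
      _ = P * ((A * B - z • 1) * A) * Q := by rw [hcomm]; simp only [Matrix.mul_assoc]
      _ = A * Q := by rw [← Matrix.mul_assoc P, hP', Matrix.one_mul]
  have htr : (A * B * P).trace = (B * A * Q).trace := by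
    rw [Matrix.mul_assoc B, ← hPA, Matrix.mul_assoc A, Matrix.trace_mul_comm A, Matrix.mul_assoc]
  have h1 : (A * B * P).trace - z * P.trace = m := by
    simpa [Matrix.sub_mul] using congrArg Matrix.trace hP
  have h2 : (B * A * Q).trace - z * Q.trace = n := by
    simpa [Matrix.sub_mul] using congrArg Matrix.trace hQ
  have key : z * (P.trace - Q.trace) = n - m := by linear_combination htr - h1 + h2
  have hm' : (m : ℂ) ≠ 0 := by exact_mod_cast hm.ne'
  have hn' : (n : ℂ) ≠ 0 := by exact_mod_cast hn.ne'
  constructor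
  · rw [eq_div_iff hz]
    linear_combination key
  · field_simp
    linear_combination key
end

section
/- Let A and B be n×n Hermitian positive semidefinite complex matrices, with eigenvalues λ_A(1) ≥ λ_A(2) ≥ … ≥ λ_A(n) and λ_B(1) ≥ λ_B(2) ≥ … ≥ λ_B(n) ordered decreasingly and counted with multiplicity. Then tr(A·B) is a nonnegative real number and ∑_{i=1}^n λ_A(i)·λ_B(n−i+1) ≤ tr(A·B) ≤ ∑_{i=1}^n λ_A(i)·λ_B(i). -/
/-!
Diagonalise `A` and `B` by unitaries `U` and `V` and put `W = Uᴴ V`. Then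
`tr (A B) = ∑ i j, a i * b j * |W i j|²`, where `a`, `b` list the eigenvalues
(`trace_mul_eq_sum`). Since `W` is unitary, the matrix `|W i j|²` is doubly stochastic
(`normSq_mem_doublyStochastic`), hence by Birkhoff's theorem a convex combination of permutation
matrices. So `tr (A B)` is a weighted average of the numbers `∑ i, a i * b (ρ i)` over
permutations `ρ` (`sum_mem_Icc_of_perm`), and the rearrangement inequality bounds each of these
by the similarly ordered sum from above and by the oppositely ordered sum from below.
-/

open Matrix
open scoped ComplexOrder

/-- The hypotheses say that `W` is unitary: its rows and its columns have Euclidean norm `1`. -/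
lemma normSq_mem_doublyStochastic {n : ℕ} (W : Matrix (Fin n) (Fin n) ℂ)
    (h1 : W * star W = 1) (h2 : star W * W = 1) :
    (Matrix.of fun i j => Complex.normSq (W i j)) ∈ doublyStochastic ℝ (Fin n) := by
  rw [mem_doublyStochastic_iff_sum]
  refine ⟨fun i j => Complex.normSq_nonneg _, fun i => ?_, fun j => ?_⟩
  · have h := congrFun (congrFun h1 i) i
    simp only [mul_apply, star_apply, one_apply_eq, RCLike.star_def, Complex.mul_conj] at h
    exact_mod_cast h
  · have h := congrFun (congrFun h2 j) j
    simp only [mul_apply, star_apply, one_apply_eq, RCLike.star_def,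
      ← Complex.normSq_eq_conj_mul_self] at h
    exact_mod_cast h

/-- The doubly stochastic matrix is `|W i j|²`, with `W = Uᴴ V` the transition matrix between the
eigenvector bases of `A` and `B`. -/
lemma trace_mul_eq_sum {n : ℕ} {A B : Matrix (Fin n) (Fin n) ℂ}
    (hA : A.IsHermitian) (hB : B.IsHermitian) :
    ∃ M ∈ doublyStochastic ℝ (Fin n), (A * B).trace =
      ((∑ i, ∑ j, hA.eigenvalues i * hB.eigenvalues j * M i j : ℝ) : ℂ) := by
  set U : Matrix (Fin n) (Fin n) ℂ := (hA.eigenvectorUnitary : Matrix (Fin n) (Fin n) ℂ) with hU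
  set V : Matrix (Fin n) (Fin n) ℂ := (hB.eigenvectorUnitary : Matrix (Fin n) (Fin n) ℂ) with hV
  have hU1 : star U * U = 1 := Unitary.coe_star_mul_self hA.eigenvectorUnitary
  have hU2 : U * star U = 1 := Unitary.coe_mul_star_self hA.eigenvectorUnitary
  have hV1 : star V * V = 1 := Unitary.coe_star_mul_self hB.eigenvectorUnitary
  have hV2 : V * star V = 1 := Unitary.coe_mul_star_self hB.eigenvectorUnitary
  have hAd : A = U * diagonal (fun i => (hA.eigenvalues i : ℂ)) * star U := hA.spectral_theorem
  have hBd : B = V * diagonal (fun i => (hB.eigenvalues i : ℂ)) * star V := hB.spectral_theorem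
  set a := hA.eigenvalues
  set b := hB.eigenvalues
  have hW1 : (star U * V) * star (star U * V) = 1 := by
    rw [star_mul, star_star, mul_assoc, ← mul_assoc V, hV2, one_mul, hU1]
  have hW2 : star (star U * V) * (star U * V) = 1 := by
    rw [star_mul, star_star, mul_assoc, ← mul_assoc U, hU2, one_mul, hV1]
  refine ⟨_, normSq_mem_doublyStochastic (star U * V) hW1 hW2, ?_⟩
  have ht : (A * B).trace = (diagonal (fun i => (a i : ℂ)) * ((star U * V) *
      (diagonal (fun i => (b i : ℂ)) * star (star U * V)))).trace := by
    rw [hAd, hBd, mul_assoc U, mul_assoc U, trace_mul_comm U, star_mul, star_star]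
    simp only [mul_assoc]
  rw [ht]
  generalize star U * V = W
  simp only [trace, diag_apply, diagonal_mul, Matrix.mul_apply (M := W), star_apply, of_apply,
    Complex.ofReal_sum, Complex.ofReal_mul, Finset.mul_sum, RCLike.star_def, ← Complex.mul_conj]
  refine Finset.sum_congr rfl fun i _ => Finset.sum_congr rfl fun j _ => ?_
  ring

/-- A bilinear form given by a doubly stochastic matrix is bounded by whatever bounds its values
at permutation matrices, by Birkhoff's theorem. -/
lemma sum_mem_Icc_of_perm {n : ℕ} {M : Matrix (Fin n) (Fin n) ℝ}
    (hM : M ∈ doublyStochastic ℝ (Fin n)) (a b : Fin n → ℝ) (c d : ℝ)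
    (h : ∀ ρ : Equiv.Perm (Fin n), ∑ i, a i * b (ρ i) ∈ Set.Icc c d) :
    ∑ i, ∑ j, a i * b j * M i j ∈ Set.Icc c d := by
  obtain ⟨w, hw0, hw1, rfl⟩ := exists_eq_sum_perm_of_mem_doublyStochastic hM
  have key : ∑ i, ∑ j, a i * b j * (∑ ρ, w ρ • ρ.permMatrix ℝ) i j =
      ∑ ρ, w ρ • ∑ i, a i * b (ρ i) := by
    simp only [Matrix.sum_apply, Matrix.smul_apply, smul_eq_mul, Finset.mul_sum]
    rw [Finset.sum_congr rfl fun i _ => Finset.sum_comm, Finset.sum_comm]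
    refine Finset.sum_congr rfl fun ρ _ => Finset.sum_congr rfl fun i _ => ?_
    simp [Equiv.Perm.permMatrix, PEquiv.toMatrix_apply]
    ring
  rw [key]
  exact (convex_Icc c d).sum_mem (fun ρ _ => hw0 ρ) hw1 (fun ρ _ => h ρ)

/-- Let `A, B` be `n×n` Hermitian positive semidefinite complex matrices
with decreasingly ordered eigenvalues `lA, lB` (counted with multiplicity, i.e. given
by permutations of the spectral eigenvalue listings). Then `tr(A·B)` is a nonnegative
real number and `∑ᵢ lA(i)·lB(n−i+1) ≤ tr(A·B) ≤ ∑ᵢ lA(i)·lB(i)`. -/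
theorem stmt3 (n : ℕ) (hn : 0 < n)
    (A B : Matrix (Fin n) (Fin n) ℂ)
    (hA : A.PosSemidef) (hB : B.PosSemidef)
    (lA lB : Fin n → ℝ)
    (hlA : Antitone lA) (hlB : Antitone lB)
    (σA σB : Equiv.Perm (Fin n))
    (hlA' : lA = hA.isHermitian.eigenvalues ∘ σA)
    (hlB' : lB = hB.isHermitian.eigenvalues ∘ σB) :
    (A * B).trace.im = 0 ∧ 0 ≤ (A * B).trace.re ∧
    (∑ i, lA i * lB i.rev) ≤ (A * B).trace.re ∧
    (A * B).trace.re ≤ ∑ i, lA i * lB i := by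
  obtain ⟨M, hM, ht⟩ := trace_mul_eq_sum hA.isHermitian hB.isHermitian
  rw [ht, Complex.ofReal_im, Complex.ofReal_re]
  refine ⟨rfl, ?_, ?_⟩
  · exact Finset.sum_nonneg fun i _ => Finset.sum_nonneg fun j _ =>
      mul_nonneg (mul_nonneg (hA.eigenvalues_nonneg i) (hB.eigenvalues_nonneg j))
        (nonneg_of_mem_doublyStochastic hM)
  · refine sum_mem_Icc_of_perm hM _ _ _ _ fun ρ => ?_
    -- In the sorted listings, `ρ` becomes the permutation `τ = σB⁻¹ ρ σA`.
    have hτ : ∑ i, hA.isHermitian.eigenvalues i * hB.isHermitian.eigenvalues (ρ i) =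
        ∑ i, lA i * lB (((σA.trans ρ).trans σB.symm) i) := by
      rw [← Equiv.sum_comp σA]
      simp [hlA', hlB']
    rw [hτ]
    generalize (σA.trans ρ).trans σB.symm = τ
    constructor
    · have hanti : Antivary lA (lB ∘ Fin.rev) :=
        hlA.antivary (hlB.comp Fin.rev_anti)
      have := hanti.sum_mul_le_sum_mul_comp_perm (σ := τ.trans Fin.revPerm)
      simpa using this
    · exact (hlA.monovary hlB).sum_mul_comp_perm_le_sum_mul
end

section
/- Let n be a positive integer and let d₁ ≥ d₂ ≥ … ≥ d_n > 0 and e₁ ≥ e₂ ≥ … ≥ e_n ≥ 0 be real numbers. Let Λ = diag(d₁,…,d_n) and D² = diag(e₁,…,e_n). Then for every n×n unitary complex matrix U, the trace tr(Λ⁻¹·U·D²·Uᴴ) is a real number and tr(Λ⁻¹·U·D²·Uᴴ) ≥ ∑_{i=1}^n e_i/d_i = tr(Λ⁻¹·D²); that is, among all unitary matrices U, the choice U = I minimizes tr(Λ⁻¹·U·D²·Uᴴ). -/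
/-!
Writing the trace entrywise gives `tr(Λ⁻¹ U D² Uᴴ) = ∑ᵢⱼ dᵢ⁻¹ eⱼ |Uᵢⱼ|²`, which is visibly real.
Since `U` is unitary, the matrix `(|Uᵢⱼ|²)` is doubly stochastic, so by Birkhoff's theorem it is
a convex combination of permutation matrices. At a permutation matrix the bilinear form
`∑ᵢⱼ dᵢ⁻¹ eⱼ Mᵢⱼ` is at least `∑ᵢ dᵢ⁻¹ eᵢ` by the rearrangement inequality, because `d⁻¹` is
increasing and `e` is decreasing (`sum_mul_le_of_mem_doublyStochastic`).
-/

/-- The rearrangement inequality extended from permutation matrices to their convex hull, the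
doubly stochastic matrices. -/
lemma sum_mul_le_of_mem_doublyStochastic {ι : Type*} [Fintype ι] [DecidableEq ι]
    {f g : ι → ℝ} (hfg : Antivary f g) {M : Matrix ι ι ℝ} (hM : M ∈ doublyStochastic ℝ ι) :
    ∑ i, f i * g i ≤ ∑ i, ∑ j, f i * g j * M i j := by
  obtain ⟨w, hw, hw1, rfl⟩ := exists_eq_sum_perm_of_mem_doublyStochastic hM
  have key : ∑ i, ∑ j, f i * g j * (∑ σ, w σ • σ.permMatrix ℝ) i j
      = ∑ σ : Equiv.Perm ι, w σ * ∑ i, f i * g (σ i) := by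
    simp only [Matrix.sum_apply, Matrix.smul_apply, Finset.mul_sum, smul_eq_mul]
    rw [Finset.sum_congr rfl fun i _ => Finset.sum_comm, Finset.sum_comm]
    refine Finset.sum_congr rfl fun σ _ => Finset.sum_congr rfl fun i _ => ?_
    simp [Equiv.Perm.permMatrix, PEquiv.toMatrix_apply]
    ring
  rw [key]
  calc ∑ i, f i * g i = ∑ σ, w σ * ∑ i, f i * g i := by rw [← Finset.sum_mul, hw1, one_mul]
    _ ≤ _ := Finset.sum_le_sum fun σ _ =>
      mul_le_mul_of_nonneg_left hfg.sum_mul_le_sum_mul_comp_perm (hw σ)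

lemma normSq_mem_doublyStochastic_s7 {ι : Type*} [Fintype ι] [DecidableEq ι]
    {U : Matrix ι ι ℂ} (h₁ : U * U.conjTranspose = 1) (h₂ : U.conjTranspose * U = 1) :
    (Matrix.of fun i j => Complex.normSq (U i j)) ∈ doublyStochastic ℝ ι := by
  rw [mem_doublyStochastic_iff_sum]
  refine ⟨fun i j => Complex.normSq_nonneg _, fun i => ?_, fun j => ?_⟩
  · have h := congrFun (congrFun h₁ i) i
    simp only [Matrix.mul_apply, Matrix.conjTranspose_apply, Matrix.one_apply_eq,
      Complex.star_def, Complex.mul_conj] at h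
    exact_mod_cast h
  · have h := congrFun (congrFun h₂ j) j
    simp only [Matrix.mul_apply, Matrix.conjTranspose_apply, Matrix.one_apply_eq,
      Complex.star_def, ← Complex.normSq_eq_conj_mul_self] at h
    exact_mod_cast h

lemma inv_diagonal_ofReal {n : ℕ} {d : Fin n → ℝ} (hdpos : ∀ i, 0 < d i) :
    (Matrix.diagonal fun i => (d i : ℂ))⁻¹ = Matrix.diagonal fun i => (((d i)⁻¹ : ℝ) : ℂ) := by
  refine Matrix.inv_eq_right_inv ?_
  rw [Matrix.diagonal_mul_diagonal, ← Matrix.diagonal_one]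
  congr 1
  funext i
  rw [← Complex.ofReal_mul, mul_inv_cancel₀ (hdpos i).ne', Complex.ofReal_one]

lemma trace_diagonal_conj {n : ℕ} (f g : Fin n → ℝ) (U : Matrix (Fin n) (Fin n) ℂ) :
    (Matrix.diagonal (fun i => (f i : ℂ)) * U * Matrix.diagonal (fun i => (g i : ℂ))
      * U.conjTranspose).trace = ((∑ i, ∑ j, f i * g j * Complex.normSq (U i j) : ℝ) : ℂ) := by
  simp only [Matrix.trace, Matrix.diag_apply]
  push_cast
  refine Finset.sum_congr rfl fun i _ => ?_
  rw [Matrix.mul_apply]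
  refine Finset.sum_congr rfl fun j _ => ?_
  rw [Matrix.mul_diagonal, Matrix.diagonal_mul, Matrix.conjTranspose_apply, Complex.star_def,
    ← Complex.mul_conj]
  ring


open Matrix

/-- Let `d₁ ≥ … ≥ d_n > 0` and `e₁ ≥ … ≥ e_n ≥ 0`, `Λ = diag(d)`,
`D² = diag(e)`. For every `n×n` unitary `U`, `tr(Λ⁻¹·U·D²·Uᴴ)` is a real number and
`tr(Λ⁻¹·U·D²·Uᴴ) ≥ ∑ᵢ eᵢ/dᵢ = tr(Λ⁻¹·D²)`; i.e. `U = I` minimizes the trace. -/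
theorem stmt7 (n : ℕ) (hn : 0 < n)
    (d e : Fin n → ℝ)
    (hd : Antitone d) (hdpos : ∀ i, 0 < d i)
    (he : Antitone e) (henn : ∀ i, 0 ≤ e i)
    (U : Matrix (Fin n) (Fin n) ℂ)
    (hU : U * Uᴴ = 1 ∧ Uᴴ * U = 1) :
    (((Matrix.diagonal fun i => (d i : ℂ))⁻¹ * U * Matrix.diagonal (fun i => (e i : ℂ)) * Uᴴ).trace).im = 0 ∧
    (∑ i, e i / d i)
      ≤ (((Matrix.diagonal fun i => (d i : ℂ))⁻¹ * U * Matrix.diagonal (fun i => (e i : ℂ)) * Uᴴ).trace).re ∧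
    ((Matrix.diagonal fun i => (d i : ℂ))⁻¹ * Matrix.diagonal (fun i => (e i : ℂ))).trace
      = ((∑ i, e i / d i : ℝ) : ℂ) := by
  rw [inv_diagonal_ofReal hdpos, trace_diagonal_conj]
  refine ⟨Complex.ofReal_im _, ?_, ?_⟩
  · rw [Complex.ofReal_re]
    have hinv : Monotone fun i => (d i)⁻¹ := fun i j hij =>
      inv_anti₀ (hdpos j) (hd hij)
    have h := sum_mul_le_of_mem_doublyStochastic (hinv.antivary he)
      (normSq_mem_doublyStochastic_s7 hU.1 hU.2)
    simpa only [div_eq_inv_mul, Matrix.of_apply] using h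
  · rw [Matrix.diagonal_mul_diagonal, Matrix.trace_diagonal]
    simp only [div_eq_inv_mul, Complex.ofReal_sum, Complex.ofReal_mul]
end

section
/- Let 0 ≤ r < 1 and t ≥ 0 be real numbers, and set c = (1−r)/(1+r). Then (1/(2π)) · ∫₀^{2π} (1 − r²) / ((1 − 2r·cos ν + r²) + t·(1 − r²)) dν = 1/√((c + t)·(1/c + t)). -/
/-!
The integrand is `(1 - r²) / (A - B cos ν)` with `A = 1 + r² + t (1 - r²)` and `B = 2 r`, where
`0 ≤ B < A`. With `s = √(A² - B²)`, the function `ν + 2 arctan (B sin ν / (A + s - B cos ν))` is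
smooth on all of `ℝ` and has derivative `s / (A - B cos ν)`
(`hasDerivAt_add_two_mul_arctan`), so `∫₀^{2π} dν / (A - B cos ν) = 2π / s`.
The result follows from `A² - B² = (1 - r²)² (c + t) (1/c + t)`.
-/

/-- A primitive of `s / (A - B cos ν)` valid on the whole line, unlike the one given by the
half-angle substitution, which jumps at odd multiples of `π`. It is the primitive
`ν + 2 arctan (ρ sin ν / (1 - ρ cos ν))` of the Poisson kernel at radius `ρ = B / (A + s)`. -/
lemma hasDerivAt_add_two_mul_arctan {A B s : ℝ} (hB : 0 ≤ B) (hAB : B < A) (hs : 0 < s)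
    (hs2 : s ^ 2 = A ^ 2 - B ^ 2) (x : ℝ) :
    HasDerivAt (fun ν : ℝ => ν + 2 * Real.arctan (B * Real.sin ν / (A + s - B * Real.cos ν)))
      (s / (A - B * Real.cos x)) x := by
  have hD : 0 < A - B * Real.cos x := by nlinarith [Real.cos_le_one x]
  have hE : 0 < A + s - B * Real.cos x := by linarith
  have hu := ((Real.hasDerivAt_sin x).const_mul B).div
    (((Real.hasDerivAt_cos x).const_mul B).const_sub (A + s)) hE.ne'
  have h := (hasDerivAt_id x).add (hu.arctan.const_mul 2)
  refine h.congr_deriv ?_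
  have hsc := Real.sin_sq_add_cos_sq x
  have hQ : (A + s - B * Real.cos x) ^ 2 + (B * Real.sin x) ^ 2
      = 2 * (A + s) * (A - B * Real.cos x) := by
    linear_combination hs2 + B ^ 2 * hsc
  have h1 : 1 + (B * Real.sin x / (A + s - B * Real.cos x)) ^ 2
      = 2 * (A + s) * (A - B * Real.cos x) / (A + s - B * Real.cos x) ^ 2 := by
    rw [← hQ]; field_simp
  have hAs : 0 < A + s := by linarith
  simp only [Pi.div_apply]
  rw [h1]
  field_simp
  linear_combination (-B ^ 2) * hsc - hs2

lemma integral_inv_sub_mul_cos {A B s : ℝ} (hB : 0 ≤ B) (hAB : B < A) (hs : 0 < s)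
    (hs2 : s ^ 2 = A ^ 2 - B ^ 2) :
    ∫ ν in (0 : ℝ)..(2 * Real.pi), s / (A - B * Real.cos ν) = 2 * Real.pi := by
  rw [intervalIntegral.integral_eq_sub_of_hasDerivAt
    (fun x _ => hasDerivAt_add_two_mul_arctan hB hAB hs hs2 x)]
  · simp
  · refine Continuous.intervalIntegrable (continuous_const.div (by fun_prop) fun x => ?_) _ _
    have : 0 < A - B * Real.cos x := by nlinarith [Real.cos_le_one x]
    exact ne_of_gt this

/-- For `0 ≤ r < 1`, `t ≥ 0` and `c = (1−r)/(1+r)`,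
`(1/(2π)) ∫₀^{2π} (1 − r²)/((1 − 2r cos ν + r²) + t(1 − r²)) dν
   = 1/√((c + t)(1/c + t))`. -/
theorem stmt12 (r t : ℝ) (hr0 : 0 ≤ r) (hr1 : r < 1) (ht : 0 ≤ t)
    (c : ℝ) (hc : c = (1 - r) / (1 + r)) :
    (1 / (2 * Real.pi)) *
        ∫ ν in (0 : ℝ)..(2 * Real.pi),
          (1 - r ^ 2) / ((1 - 2 * r * Real.cos ν + r ^ 2) + t * (1 - r ^ 2))
      = 1 / Real.sqrt ((c + t) * (1 / c + t)) := by
  have h1 : 0 < 1 - r := by linarith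
  have h2 : 0 < 1 + r := by linarith
  have hm : 0 < 1 - r ^ 2 := by nlinarith
  have hc0 : 0 < c := hc ▸ div_pos h1 h2
  have hP : 0 < (c + t) * (1 / c + t) := by positivity
  set q := Real.sqrt ((c + t) * (1 / c + t)) with hq
  have hq0 : 0 < q := Real.sqrt_pos.2 hP
  have hq2 : q ^ 2 = (c + t) * (1 / c + t) := Real.sq_sqrt hP.le
  have hs2 : ((1 - r ^ 2) * q) ^ 2
      = (1 + r ^ 2 + t * (1 - r ^ 2)) ^ 2 - (2 * r) ^ 2 := by
    rw [mul_pow, hq2, hc]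
    field_simp
    ring
  have hAB : 2 * r < 1 + r ^ 2 + t * (1 - r ^ 2) := by
    nlinarith [mul_nonneg ht hm.le, mul_pos h1 h1]
  have hI := integral_inv_sub_mul_cos (by linarith : 0 ≤ 2 * r) hAB (mul_pos hm hq0) hs2
  have hfun : ∀ ν : ℝ, (1 - r ^ 2) / ((1 - 2 * r * Real.cos ν + r ^ 2) + t * (1 - r ^ 2))
      = q⁻¹ * ((1 - r ^ 2) * q / (1 + r ^ 2 + t * (1 - r ^ 2) - 2 * r * Real.cos ν)) := by
    intro ν
    rw [show (1 - 2 * r * Real.cos ν + r ^ 2) + t * (1 - r ^ 2)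
      = 1 + r ^ 2 + t * (1 - r ^ 2) - 2 * r * Real.cos ν by ring, ← mul_div_assoc]
    congr 1
    field_simp
  simp_rw [hfun]
  rw [intervalIntegral.integral_const_mul, hI]
  have := Real.pi_pos
  field_simp
end

section
/- Let 0 ≤ r₁ < 1, 0 ≤ r₂ < 1 and t ≥ 0 be real numbers. Set c₁ = (1−r₁)/(1+r₁), c₂ = (1−r₂)/(1+r₂), and m = 1 − ((c₂/c₁ + t)·(c₁/c₂ + t)) / ((1/(c₁c₂) + t)·(c₁c₂ + t)); then 0 ≤ m < 1, and (1/(2π)²) · ∫₀^{2π} ∫₀^{2π} (1−r₁²)·(1−r₂²) / ((1 − 2r₁·cos λ + r₁²)·(1 − 2r₂·cos ν + r₂²) + t·(1−r₁²)·(1−r₂²)) dλ dν = (2/π) · (1/√((c₁c₂ + t)·(1/(c₁c₂) + t))) · K(m), where K(m) = ∫₀^{π/2} dθ/√(1 − m·sin²θ) is the complete elliptic integral of the first kind. -/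
/-!
Put `x(λ) = (1 - 2 r₁ cos λ + r₁²) / (1 - r₁²) = c₁ cos²(λ/2) + c₁⁻¹ sin²(λ/2)`, and define `y(ν)`
likewise from `r₂`. The integrand is `1 / (x y + t)`, and in `ν` it has the form
`1 / (P cos²(ν/2) + Q sin²(ν/2))` with `P = x c₂ + t`, `Q = x / c₂ + t`. Since
`∫₀^π dφ / (P cos² φ + Q sin² φ) = π / √(P Q)` (`integral_inv_quadForm`), the inner integral is
`2π / √(P Q)`. As functions of `λ/2`, both `P` and `Q` are again of the form
`a cos² + b sin²`, so an elliptic integral with two such factors remains. The substitution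
`tan φ = k tan θ` with a suitable `k` turns one of the factors into a constant
(`integral_inv_sqrt_mul`) and leaves Legendre's form of `K(m)`.

Both integrals use the same substitution. To avoid the poles of `tan` it is written as the globally
smooth map `tanScale k`, which fixes `0` and `π`.
-/

open Real in
/-- For `k > 0`, the smooth lift of `tan φ = k * tan θ`: the branch of `arctan (k * tan θ)` which is
continuous on the whole line and fixes the multiples of `π / 2`. The correction `φ - θ` has tangent
`(k - 1) tan θ / (1 + k tan² θ)`, rewritten here without poles. -/
noncomputable def tanScale (k θ : ℝ) : ℝ :=
  θ + arctan ((k - 1) * sin θ * cos θ / (cos θ ^ 2 + k * sin θ ^ 2))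

open Real

lemma quadForm_pos {p q : ℝ} (hp : 0 < p) (hq : 0 < q) (θ : ℝ) :
    0 < p * cos θ ^ 2 + q * sin θ ^ 2 := by
  rcases eq_or_ne (sin θ) 0 with h | h
  · have := sin_sq_add_cos_sq θ
    rw [h] at this ⊢
    nlinarith
  · have : 0 < sin θ ^ 2 := by positivity
    positivity

lemma tanScale_zero (k : ℝ) : tanScale k 0 = 0 := by simp [tanScale]

lemma tanScale_pi (k : ℝ) : tanScale k π = π := by simp [tanScale]

/-- With `w = tan (tanScale k θ - θ)`, this computes `1 + w ^ 2`. -/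
lemma one_add_sq_aux {k : ℝ} (hk : 0 < k) (θ : ℝ) :
    1 + ((k - 1) * sin θ * cos θ / (cos θ ^ 2 + k * sin θ ^ 2)) ^ 2
      = (cos θ ^ 2 + k ^ 2 * sin θ ^ 2) / (cos θ ^ 2 + k * sin θ ^ 2) ^ 2 := by
  have hD : 0 < cos θ ^ 2 + k * sin θ ^ 2 := by simpa using quadForm_pos one_pos hk θ
  have h1 := sin_sq_add_cos_sq θ
  field_simp
  linear_combination (cos θ ^ 2 + k ^ 2 * sin θ ^ 2) * h1

lemma cos_sq_tanScale {k : ℝ} (hk : 0 < k) (θ : ℝ) :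
    cos (tanScale k θ) ^ 2 = cos θ ^ 2 / (cos θ ^ 2 + k ^ 2 * sin θ ^ 2) := by
  have hD : 0 < cos θ ^ 2 + k * sin θ ^ 2 := by simpa using quadForm_pos one_pos hk θ
  have hE : 0 < cos θ ^ 2 + k ^ 2 * sin θ ^ 2 := by
    simpa using quadForm_pos one_pos (pow_pos hk 2) θ
  have h1 := sin_sq_add_cos_sq θ
  have hw := one_add_sq_aux hk θ
  have key : cos θ - sin θ * ((k - 1) * sin θ * cos θ / (cos θ ^ 2 + k * sin θ ^ 2))
      = cos θ / (cos θ ^ 2 + k * sin θ ^ 2) := by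
    have hcancel := div_mul_cancel₀ ((k - 1) * sin θ * cos θ) hD.ne'
    rw [eq_div_iff hD.ne']
    linear_combination cos θ * h1 - sin θ * hcancel
  unfold tanScale
  generalize (k - 1) * sin θ * cos θ / (cos θ ^ 2 + k * sin θ ^ 2) = w at *
  have hwp : (0 : ℝ) < 1 + w ^ 2 := by positivity
  have : cos (θ + arctan w) = (cos θ - sin θ * w) / √(1 + w ^ 2) := by
    rw [cos_add, cos_arctan, sin_arctan]; ring
  rw [this, key, div_pow, sq_sqrt hwp.le, hw]
  field_simp

lemma sin_sq_tanScale {k : ℝ} (hk : 0 < k) (θ : ℝ) :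
    sin (tanScale k θ) ^ 2 = k ^ 2 * sin θ ^ 2 / (cos θ ^ 2 + k ^ 2 * sin θ ^ 2) := by
  have hE : 0 < cos θ ^ 2 + k ^ 2 * sin θ ^ 2 := by
    simpa using quadForm_pos one_pos (pow_pos hk 2) θ
  rw [sin_sq, cos_sq_tanScale hk]
  field_simp
  ring

lemma hasDerivAt_tanScale {k : ℝ} (hk : 0 < k) (θ : ℝ) :
    HasDerivAt (tanScale k) (k / (cos θ ^ 2 + k ^ 2 * sin θ ^ 2)) θ := by
  have hD : 0 < cos θ ^ 2 + k * sin θ ^ 2 := by simpa using quadForm_pos one_pos hk θ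
  have hE : 0 < cos θ ^ 2 + k ^ 2 * sin θ ^ 2 := by
    simpa using quadForm_pos one_pos (pow_pos hk 2) θ
  have hw := one_add_sq_aux hk θ
  have hnum := ((hasDerivAt_sin θ).const_mul (k - 1)).mul (hasDerivAt_cos θ)
  have hden := ((hasDerivAt_cos θ).pow 2).add (((hasDerivAt_sin θ).pow 2).const_mul k)
  have h := (hasDerivAt_id θ).add ((hnum.div hden hD.ne').arctan)
  refine h.congr_deriv ?_
  have h1 := sin_sq_add_cos_sq θ
  simp only [Pi.mul_apply, Pi.add_apply, Pi.pow_apply, Pi.div_apply]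
  rw [hw]
  simp only [Nat.cast_ofNat, Nat.add_one_sub_one, pow_one]
  field_simp
  have hc : cos θ ^ 2 = 1 - sin θ ^ 2 := by linear_combination h1
  have hc4 : cos θ ^ 4 = (1 - sin θ ^ 2) ^ 2 := by rw [← hc]; ring
  ring_nf
  simp only [hc, hc4]
  ring

lemma continuous_deriv_tanScale {k : ℝ} (hk : 0 < k) :
    Continuous fun θ => k / (cos θ ^ 2 + k ^ 2 * sin θ ^ 2) := by
  refine continuous_const.div (by fun_prop) fun θ => ?_
  have := quadForm_pos one_pos (pow_pos hk 2) θ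
  rw [one_mul] at this
  exact this.ne'

lemma integral_inv_quadForm {p q : ℝ} (hp : 0 < p) (hq : 0 < q) :
    ∫ θ in (0 : ℝ)..π, 1 / (p * cos θ ^ 2 + q * sin θ ^ 2) = π / √(p * q) := by
  have hk : 0 < √(q / p) := sqrt_pos.2 (div_pos hq hp)
  have hk2 : √(q / p) ^ 2 = q / p := sq_sqrt (div_pos hq hp).le
  have hpk : √(p * q) = p * √(q / p) := by
    rw [sqrt_eq_iff_mul_self_eq (by positivity) (by positivity)]
    have : p * √(q / p) * (p * √(q / p)) = p ^ 2 * √(q / p) ^ 2 := by ring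
    rw [this, hk2]; field_simp
  have h := intervalIntegral.integral_eq_sub_of_hasDerivAt (a := 0) (b := π)
    (fun θ _ => hasDerivAt_tanScale hk θ) ((continuous_deriv_tanScale hk).intervalIntegrable _ _)
  rw [tanScale_zero, tanScale_pi, sub_zero] at h
  rw [hpk, ← h, ← intervalIntegral.integral_div]
  congr 1
  ext θ
  have h0 := quadForm_pos hp hq θ
  have h2 := quadForm_pos one_pos (pow_pos hk 2) θ
  rw [one_mul] at h2
  rw [div_div, div_eq_div_iff h0.ne' (by positivity), hk2]
  field_simp

/-- The substitution `tan φ = √(r / s) * tan θ` makes the second factor constant. -/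
lemma integral_inv_sqrt_mul {p q r s : ℝ} (hp : 0 < p) (hq : 0 < q) (hr : 0 < r) (hs : 0 < s) :
    ∫ φ in (0 : ℝ)..π,
        1 / √((p * cos φ ^ 2 + q * sin φ ^ 2) * (r * cos φ ^ 2 + s * sin φ ^ 2))
      = ∫ θ in (0 : ℝ)..π, 1 / √(p * s * cos θ ^ 2 + q * r * sin θ ^ 2) := by
  have hk : 0 < √(r / s) := sqrt_pos.2 (div_pos hr hs)
  have hk2 : √(r / s) ^ 2 = r / s := sq_sqrt (div_pos hr hs).le
  have hcont : Continuous fun φ =>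
      1 / √((p * cos φ ^ 2 + q * sin φ ^ 2) * (r * cos φ ^ 2 + s * sin φ ^ 2)) := by
    refine continuous_const.div (by fun_prop) fun φ => ?_
    exact (sqrt_pos.2 (mul_pos (quadForm_pos hp hq φ) (quadForm_pos hr hs φ))).ne'
  have h := intervalIntegral.integral_comp_mul_deriv (a := 0) (b := π)
    (fun θ _ => hasDerivAt_tanScale hk θ) (continuous_deriv_tanScale hk).continuousOn hcont
  rw [tanScale_zero, tanScale_pi] at h
  rw [← h]
  congr 1
  ext θ
  have hE := quadForm_pos one_pos (pow_pos hk 2) θ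
  rw [one_mul] at hE
  have hT := quadForm_pos (mul_pos hp hs) (mul_pos hq hr) θ
  simp only [Function.comp_apply, cos_sq_tanScale hk, sin_sq_tanScale hk]
  have h1 := sin_sq_add_cos_sq θ
  set E := cos θ ^ 2 + √(r / s) ^ 2 * sin θ ^ 2 with hEdef
  have harg : (p * (cos θ ^ 2 / E) + q * (√(r / s) ^ 2 * sin θ ^ 2 / E)) *
      (r * (cos θ ^ 2 / E) + s * (√(r / s) ^ 2 * sin θ ^ 2 / E))
      = (√(r / s) / E) ^ 2 * (p * s * cos θ ^ 2 + q * r * sin θ ^ 2) := by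
    rw [div_pow, hk2]
    field_simp
    linear_combination (p * s * cos θ ^ 2 + q * r * sin θ ^ 2) * h1
  rw [harg, sqrt_mul (by positivity), sqrt_sq (by positivity)]
  have := sqrt_pos.2 hT
  field_simp

/-- A function of `sin² θ` has the same integral over the two halves of `[0, π]`. -/
lemma integral_zero_pi_fold (g : ℝ → ℝ) (hg : Continuous fun θ => g (sin θ ^ 2)) :
    ∫ θ in (0 : ℝ)..π, g (sin θ ^ 2) = 2 * ∫ θ in (0 : ℝ)..(π / 2), g (sin θ ^ 2) := by
  rw [← intervalIntegral.integral_add_adjacent_intervals (b := π / 2)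
    (hg.intervalIntegrable _ _) (hg.intervalIntegrable _ _)]
  have h := intervalIntegral.integral_comp_sub_left (a := 0) (b := π / 2)
    (fun θ => g (sin θ ^ 2)) π
  simp only [sin_pi_sub, sub_zero] at h
  have h2 : π - π / 2 = π / 2 := by ring
  rw [h2] at h
  rw [← h, two_mul]

lemma integral_half_angle (f : ℝ → ℝ) :
    ∫ x in (0 : ℝ)..(2 * π), f (x / 2) = 2 * ∫ x in (0 : ℝ)..π, f x := by
  rw [intervalIntegral.integral_comp_div _ two_ne_zero, zero_div,
    mul_div_cancel_left₀ _ two_ne_zero, smul_eq_mul]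

/-- The half-angle form of the Poisson-kernel denominator. -/
lemma half_angle {r c : ℝ} (h0 : 0 ≤ r) (h1 : r < 1) (hc : c = (1 - r) / (1 + r)) (l : ℝ) :
    1 - 2 * r * cos l + r ^ 2
      = (1 - r ^ 2) * (c * cos (l / 2) ^ 2 + 1 / c * sin (l / 2) ^ 2) := by
  have hcos : cos l = cos (l / 2) ^ 2 - sin (l / 2) ^ 2 := by
    rw [← cos_two_mul']; ring_nf
  have hone := sin_sq_add_cos_sq (l / 2)
  have ha : 0 < 1 - r := by linarith
  have hb : 0 < 1 + r := by linarith
  rw [hcos, hc]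
  have hne := ha.ne'
  field_simp
  linear_combination (r ^ 4 - 1) * hone

/-- For `0 ≤ r₁ < 1`, `0 ≤ r₂ < 1`, `t ≥ 0`, with
`c₁ = (1−r₁)/(1+r₁)`, `c₂ = (1−r₂)/(1+r₂)` and
`m = 1 − ((c₂/c₁ + t)(c₁/c₂ + t))/((1/(c₁c₂) + t)(c₁c₂ + t))`, one has `0 ≤ m < 1` and
`(1/(2π)²) ∫₀^{2π} ∫₀^{2π} (1−r₁²)(1−r₂²)/((1−2r₁cos λ+r₁²)(1−2r₂cos ν+r₂²)+t(1−r₁²)(1−r₂²)) dλ dν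
  = (2/π) (1/√((c₁c₂+t)(1/(c₁c₂)+t))) K(m)`,
where `K(m) = ∫₀^{π/2} dθ/√(1 − m sin²θ)` is the complete elliptic integral of the
first kind. -/
theorem stmt16 (r₁ r₂ t : ℝ) (hr₁0 : 0 ≤ r₁) (hr₁1 : r₁ < 1)
    (hr₂0 : 0 ≤ r₂) (hr₂1 : r₂ < 1) (ht : 0 ≤ t)
    (c₁ c₂ m : ℝ)
    (hc₁ : c₁ = (1 - r₁) / (1 + r₁)) (hc₂ : c₂ = (1 - r₂) / (1 + r₂))
    (hm : m = 1 - ((c₂ / c₁ + t) * (c₁ / c₂ + t)) / ((1 / (c₁ * c₂) + t) * (c₁ * c₂ + t))) :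
    (0 ≤ m ∧ m < 1) ∧
    (1 / (2 * Real.pi) ^ 2) *
        ∫ l in (0 : ℝ)..(2 * Real.pi), ∫ ν in (0 : ℝ)..(2 * Real.pi),
          (1 - r₁ ^ 2) * (1 - r₂ ^ 2) /
            ((1 - 2 * r₁ * Real.cos l + r₁ ^ 2) * (1 - 2 * r₂ * Real.cos ν + r₂ ^ 2)
              + t * (1 - r₁ ^ 2) * (1 - r₂ ^ 2))
      = (2 / Real.pi) * (1 / Real.sqrt ((c₁ * c₂ + t) * (1 / (c₁ * c₂) + t)))
          * ∫ θ in (0 : ℝ)..(Real.pi / 2), 1 / Real.sqrt (1 - m * Real.sin θ ^ 2) := by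
  have hc₁p : 0 < c₁ := by rw [hc₁]; exact div_pos (by linarith) (by linarith)
  have hc₂p : 0 < c₂ := by rw [hc₂]; exact div_pos (by linarith) (by linarith)
  have hc₁1 : c₁ ≤ 1 := by rw [hc₁, div_le_one (by linarith)]; linarith
  have hc₂1 : c₂ ≤ 1 := by rw [hc₂, div_le_one (by linarith)]; linarith
  have hp : 0 < c₁ * c₂ + t := by positivity
  have hq : 0 < c₂ / c₁ + t := by positivity
  have hr : 0 < c₁ / c₂ + t := by positivity
  have hs : 0 < 1 / (c₁ * c₂) + t := by positivity
  have hdiff : (c₁ * c₂ + t) * (1 / (c₁ * c₂) + t) - (c₂ / c₁ + t) * (c₁ / c₂ + t)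
      = t * (1 - c₁ ^ 2) * (1 - c₂ ^ 2) / (c₁ * c₂) := by
    field_simp
    ring
  have hdiff0 : 0 ≤ t * (1 - c₁ ^ 2) * (1 - c₂ ^ 2) / (c₁ * c₂) := by
    have h1 : 0 ≤ 1 - c₁ ^ 2 := by nlinarith
    have h2 : 0 ≤ 1 - c₂ ^ 2 := by nlinarith
    positivity
  have hm0 : 0 ≤ m := by
    rw [hm, sub_nonneg, div_le_one (by positivity)]
    linarith
  have hm1 : m < 1 := by
    rw [hm]
    have : 0 < (c₂ / c₁ + t) * (c₁ / c₂ + t) / ((1 / (c₁ * c₂) + t) * (c₁ * c₂ + t)) := by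
      positivity
    linarith
  refine ⟨⟨hm0, hm1⟩, ?_⟩
  have hR₁ : 0 < 1 - r₁ ^ 2 := by nlinarith
  have hR₂ : 0 < 1 - r₂ ^ 2 := by nlinarith
  have inner : ∀ l : ℝ, ∫ ν in (0 : ℝ)..(2 * π),
      (1 - r₁ ^ 2) * (1 - r₂ ^ 2) /
        ((1 - 2 * r₁ * cos l + r₁ ^ 2) * (1 - 2 * r₂ * cos ν + r₂ ^ 2)
          + t * (1 - r₁ ^ 2) * (1 - r₂ ^ 2))
      = 2 * π * (fun φ => 1 / √(((c₁ * c₂ + t) * cos φ ^ 2 + (c₂ / c₁ + t) * sin φ ^ 2) *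
          ((c₁ / c₂ + t) * cos φ ^ 2 + (1 / (c₁ * c₂) + t) * sin φ ^ 2))) (l / 2) := by
    intro l
    have hone := sin_sq_add_cos_sq (l / 2)
    have hP := quadForm_pos hp hq (l / 2)
    have hQ := quadForm_pos hr hs (l / 2)
    set P := (c₁ * c₂ + t) * cos (l / 2) ^ 2 + (c₂ / c₁ + t) * sin (l / 2) ^ 2 with hPdef
    set Q := (c₁ / c₂ + t) * cos (l / 2) ^ 2 + (1 / (c₁ * c₂) + t) * sin (l / 2) ^ 2 with hQdef
    have hx := half_angle hr₁0 hr₁1 hc₁ l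
    set x := c₁ * cos (l / 2) ^ 2 + 1 / c₁ * sin (l / 2) ^ 2 with hxdef
    have hPx : P = x * c₂ + t := by
      rw [hPdef, hxdef]
      linear_combination t * hone
    have hQx : Q = x / c₂ + t := by
      rw [hQdef, hxdef]
      field_simp
      linear_combination c₁ * c₂ * t * hone
    have hint : ∀ ν : ℝ, (1 - r₁ ^ 2) * (1 - r₂ ^ 2) /
        ((1 - 2 * r₁ * cos l + r₁ ^ 2) * (1 - 2 * r₂ * cos ν + r₂ ^ 2)
          + t * (1 - r₁ ^ 2) * (1 - r₂ ^ 2))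
        = (fun φ => 1 / (P * cos φ ^ 2 + Q * sin φ ^ 2)) (ν / 2) := by
      intro ν
      have hden : (1 - 2 * r₁ * cos l + r₁ ^ 2) * (1 - 2 * r₂ * cos ν + r₂ ^ 2)
          + t * (1 - r₁ ^ 2) * (1 - r₂ ^ 2)
          = (1 - r₁ ^ 2) * (1 - r₂ ^ 2) * (P * cos (ν / 2) ^ 2 + Q * sin (ν / 2) ^ 2) := by
        rw [hx, half_angle hr₂0 hr₂1 hc₂ ν, hPx, hQx]
        linear_combination (-(t * (1 - r₁ ^ 2) * (1 - r₂ ^ 2))) * sin_sq_add_cos_sq (ν / 2)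
      have hpos := quadForm_pos hP hQ (ν / 2)
      simp only
      rw [hden]
      field_simp
    simp_rw [hint]
    rw [integral_half_angle (fun φ => 1 / (P * cos φ ^ 2 + Q * sin φ ^ 2)),
      integral_inv_quadForm hP hQ]
    ring
  simp_rw [inner]
  rw [intervalIntegral.integral_const_mul, integral_half_angle (fun φ =>
      1 / √(((c₁ * c₂ + t) * cos φ ^ 2 + (c₂ / c₁ + t) * sin φ ^ 2) *
        ((c₁ / c₂ + t) * cos φ ^ 2 + (1 / (c₁ * c₂) + t) * sin φ ^ 2))),
    integral_inv_sqrt_mul hp hq hr hs]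
  have hsq : ∀ θ : ℝ, 0 < 1 - m * sin θ ^ 2 := by
    intro θ
    have := sin_sq_le_one θ
    nlinarith [sq_nonneg (sin θ)]
  have hlast : ∀ θ : ℝ, 1 / √((c₁ * c₂ + t) * (1 / (c₁ * c₂) + t) * cos θ ^ 2
        + (c₂ / c₁ + t) * (c₁ / c₂ + t) * sin θ ^ 2)
      = 1 / √((c₁ * c₂ + t) * (1 / (c₁ * c₂) + t)) * (1 / √(1 - m * sin θ ^ 2)) := by
    intro θ
    have hmul : (c₂ / c₁ + t) * (c₁ / c₂ + t)
        = (1 - m) * ((c₁ * c₂ + t) * (1 / (c₁ * c₂) + t)) := by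
      rw [hm, sub_sub_cancel, mul_comm (1 / (c₁ * c₂) + t), div_mul_cancel₀]
      positivity
    rw [one_div_mul_one_div, ← sqrt_mul (by positivity), hmul, cos_sq']
    congr 2
    ring
  simp_rw [hlast]
  rw [intervalIntegral.integral_const_mul,
    integral_zero_pi_fold (fun u => 1 / √(1 - m * u))
      (continuous_const.div (by fun_prop) fun θ => (sqrt_pos.2 (hsq θ)).ne')]
  have hpi := pi_pos
  field_simp
end
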